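/- arXiv:0907.2758 — 2 statements merged into one kernel-verified Lean document; each statement's English description precedes it below -/
import Mathlib

section
/- Fix ℓ₀ > 0, T ∈ (0, ∞], and let Φ : [0, T) × [−ℓ₀/2, ℓ₀/2] → ℝ be a C^{1,4} solution of the Kuramoto–Sivashinsky equation Φ_τ = −3Φ_ηηηη − Φ_ηη − (1/2)(Φ_η)² satisfying the periodic boundary conditions D_η^{(k)}Φ(τ,−ℓ₀/2) = D_η^{(k)}Φ(τ,ℓ₀/2) for k = 0,1,2,3 and Φ(0,·) = Φ₀. Let Π(Φ(τ,·)) = (1/ℓ₀)∫_{−ℓ₀/2}^{ℓ₀/2} Φ(τ,η) dη. Then for every τ ∈ [0, T), |Π(Φ(τ,·))| ≤ |Π(Φ₀)| + (3/(26ℓ₀))·‖Φ₀'‖₂²·e^{13τ/3}, where ‖f‖₂² = ∫_{−ℓ₀/2}^{ℓ₀/2} f(η)² dη. -/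
open Set

/-- The spatial interval `[−ℓ₀/2, ℓ₀/2]`. -/
def Iℓ (ℓ₀ : ℝ) : Set ℝ := Icc (-(ℓ₀ / 2)) (ℓ₀ / 2)

/-- The time interval `[0, T)`, where `T ∈ (0, ∞]` is an extended real number. -/
def ksDom (T : EReal) : Set ℝ := {τ : ℝ | 0 ≤ τ ∧ (τ : EReal) < T}

/-- `Φ : [0,T) × [−ℓ₀/2, ℓ₀/2] → ℝ` is a `C^{1,4}` solution of the Kuramoto–Sivashinsky
equation `Φ_τ = −3Φ_ηηηη − Φ_ηη − (1/2)(Φ_η)²` with `ℓ₀`-periodic boundary conditions;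
`Φτ` is the time derivative and `D j` the `j`-th spatial derivative (`D 0 = Φ`), all
jointly continuous on the domain. -/
def IsKSSolutionOn (ℓ₀ : ℝ) (T : EReal) (Φ Φτ : ℝ → ℝ → ℝ) (D : ℕ → ℝ → ℝ → ℝ) : Prop :=
  D 0 = Φ ∧
  (∀ τ ∈ ksDom T, ∀ η ∈ Iℓ ℓ₀,
    HasDerivWithinAt (fun t => Φ t η) (Φτ τ η) (ksDom T) τ) ∧
  (∀ j < 4, ∀ τ ∈ ksDom T, ∀ η ∈ Iℓ ℓ₀,
    HasDerivWithinAt (fun y => D j τ y) (D (j + 1) τ η) (Iℓ ℓ₀) η) ∧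
  ContinuousOn (fun p : ℝ × ℝ => Φτ p.1 p.2) (ksDom T ×ˢ Iℓ ℓ₀) ∧
  (∀ j ≤ 4, ContinuousOn (fun p : ℝ × ℝ => D j p.1 p.2) (ksDom T ×ˢ Iℓ ℓ₀)) ∧
  (∀ τ ∈ ksDom T, ∀ η ∈ Iℓ ℓ₀,
    Φτ τ η = -3 * D 4 τ η - D 2 τ η - 1 / 2 * (D 1 τ η) ^ 2) ∧
  (∀ τ ∈ ksDom T, ∀ j ≤ 3, D j τ (-(ℓ₀ / 2)) = D j τ (ℓ₀ / 2))

/-! Integrating the equation over a period leaves `dΠ/dτ = -‖Φ_η‖₂² / (2ℓ₀)`, so everything rests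
on the growth of `‖Φ_η‖₂²`. Testing the equation against `-2 Φ_ηη` and integrating by parts, the
cubic term disappears, and completing the square gives
`d/dτ ‖Φ_η‖₂² = -6 ‖Φ_ηηη‖₂² - 2 ∫ Φ_η Φ_ηηη ≤ ‖Φ_η‖₂² / 6`. Hence
`‖Φ_η(τ)‖₂² ≤ e^{τ/6} ‖Φ₀'‖₂²` and `|Π(Φ(τ)) - Π(Φ₀)| ≤ (3/ℓ₀) ‖Φ₀'‖₂² (e^{τ/6} - 1)`, which is
sharper than the stated estimate because `26 (e^{τ/6} - 1) ≤ e^{26 τ/6}` by Bernoulli's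
inequality. -/

open MeasureTheory Filter Topology

section ParametricIntegral

variable {X : Type*} [TopologicalSpace X]

theorem eventually_forall_norm_le_of_continuousOn_uncurry {Y F : Type*} [TopologicalSpace Y]
    [SeminormedAddCommGroup F] {S : Set Y} {K : Set X} {f : Y → X → F} {t : Y} (hK : IsCompact K)
    (hf : ContinuousOn f.uncurry (S ×ˢ K)) (ht : t ∈ S) :
    ∃ C, ∀ᶠ s in 𝓝[S] t, ∀ x ∈ K, ‖f s x‖ ≤ C := by
  obtain ⟨C, hC⟩ := hK.exists_bound_of_continuousOn (hf.uncurry_left t ht)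
  obtain ⟨V, hV, hclose⟩ := hK.mem_uniformity_of_prod hf ht (Metric.dist_mem_uniformity one_pos)
  refine ⟨C + 1, mem_of_superset hV fun s hs x hx => ?_⟩
  have hdist : ‖f s x - f t x‖ < 1 := by simpa [dist_eq_norm] using hclose s hs x hx
  linarith [norm_le_norm_add_norm_sub' (f s x) (f t x), hC x hx]

variable {E : Type*} [NormedAddCommGroup E] [NormedSpace ℝ E]

theorem eventually_forall_norm_sub_le_of_hasDerivWithinAt {S : Set ℝ} {K : Set X}
    {u u' : ℝ → X → E} {t : ℝ} (hS : Convex ℝ S) (hK : IsCompact K)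
    (hu : ∀ s ∈ S, ∀ x ∈ K, HasDerivWithinAt (fun r => u r x) (u' s x) S s)
    (hu' : ContinuousOn u'.uncurry (S ×ˢ K)) (ht : t ∈ S) :
    ∃ C, ∀ᶠ s in 𝓝[S] t, ∀ x ∈ K, ‖u s x - u t x‖ ≤ C * ‖s - t‖ := by
  obtain ⟨C, hC⟩ := eventually_forall_norm_le_of_continuousOn_uncurry hK hu' ht
  obtain ⟨ε, hε, hball⟩ := Metric.mem_nhdsWithin_iff.1 hC
  refine ⟨C, ?_⟩
  filter_upwards [inter_mem_nhdsWithin S (Metric.ball_mem_nhds t hε)] with s hs x hx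
  have hconvex : Convex ℝ (S ∩ Metric.ball t ε) := hS.inter (convex_ball t ε)
  exact hconvex.norm_image_sub_le_of_norm_hasDerivWithin_le
    (fun r hr => (hu r hr.1 x hx).mono inter_subset_left)
    (fun r hr => hball ⟨hr.2, hr.1⟩ x hx) ⟨ht, Metric.mem_ball_self hε⟩ hs

/-- The increment `u s x - u t x` vanishes at `s = t`, so the weight `w` is never differentiated. -/
theorem hasDerivWithinAt_integral_smul_sub {S : Set ℝ} {a b t : ℝ} {u u' : ℝ → ℝ → E}
    {w : ℝ → ℝ → ℝ} (hS : Convex ℝ S)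
    (hu : ∀ s ∈ S, ∀ x ∈ uIcc a b, HasDerivWithinAt (fun r => u r x) (u' s x) S s)
    (hcu : ContinuousOn u.uncurry (S ×ˢ uIcc a b))
    (hcu' : ContinuousOn u'.uncurry (S ×ˢ uIcc a b))
    (hcw : ContinuousOn w.uncurry (S ×ˢ uIcc a b)) (ht : t ∈ S) :
    HasDerivWithinAt (fun s => ∫ x in a..b, w s x • (u s x - u t x))
      (∫ x in a..b, w t x • u' t x) S t := by
  obtain ⟨L, hL⟩ := eventually_forall_norm_sub_le_of_hasDerivWithinAt hS isCompact_uIcc hu hcu' ht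
  obtain ⟨M, hM⟩ := eventually_forall_norm_le_of_continuousOn_uncurry isCompact_uIcc hcw ht
  have hslope (s : ℝ) : slope (fun s => ∫ x in a..b, w s x • (u s x - u t x)) t s =
      ∫ x in a..b, w s x • slope (fun r => u r x) t s := by
    simp [slope_def_module, smul_comm (w s _), intervalIntegral.integral_smul]
  have hle : 𝓝[S \ {t}] t ≤ 𝓝[S] t := nhdsWithin_mono t sdiff_subset
  rw [hasDerivWithinAt_iff_tendsto_slope, tendsto_congr hslope]
  refine intervalIntegral.tendsto_integral_filter_of_dominated_convergence (fun _ => M * L)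
    ?measurable ?bound intervalIntegrable_const (ae_of_all _ fun x hx => ?limit)
  case measurable =>
    filter_upwards [self_mem_nhdsWithin] with s hs
    have hcont : ContinuousOn (fun x => w s x • slope (fun r => u r x) t s) (uIcc a b) :=
      (hcw.uncurry_left s hs.1).smul
        (((hcu.uncurry_left s hs.1).sub (hcu.uncurry_left t ht)).const_smul (s - t)⁻¹)
    exact (hcont.mono uIoc_subset_uIcc).aestronglyMeasurable measurableSet_uIoc
  case bound =>
    filter_upwards [self_mem_nhdsWithin, hle hL, hle hM] with s hs hLs hMs
    refine ae_of_all _ fun x hx => ?_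
    have hst : 0 < ‖s - t‖ := norm_pos_iff.2 (sub_ne_zero.2 hs.2)
    have hslope_le : ‖slope (fun r => u r x) t s‖ ≤ L := by
      rw [slope_def_module, norm_smul, norm_inv, inv_mul_le_iff₀ hst, mul_comm]
      exact hLs x (uIoc_subset_uIcc hx)
    have hw_le : ‖w s x‖ ≤ M := hMs x (uIoc_subset_uIcc hx)
    rw [norm_smul]
    exact mul_le_mul hw_le hslope_le (norm_nonneg _) ((norm_nonneg _).trans hw_le)
  case limit =>
    have hx' := uIoc_subset_uIcc hx
    exact ((hcw.uncurry_right x hx' t ht).mono_left hle).smul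
      (hasDerivWithinAt_iff_tendsto_slope.1 (hu t ht x hx'))

theorem hasDerivWithinAt_integral_of_continuousOn {S : Set ℝ} {a b t : ℝ} {u u' : ℝ → ℝ → E}
    (hS : Convex ℝ S)
    (hu : ∀ s ∈ S, ∀ x ∈ uIcc a b, HasDerivWithinAt (fun r => u r x) (u' s x) S s)
    (hcu : ContinuousOn u.uncurry (S ×ˢ uIcc a b))
    (hcu' : ContinuousOn u'.uncurry (S ×ˢ uIcc a b)) (ht : t ∈ S) :
    HasDerivWithinAt (fun s => ∫ x in a..b, u s x) (∫ x in a..b, u' t x) S t := by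
  have hincrement := hasDerivWithinAt_integral_smul_sub (w := fun _ _ => 1) hS hu hcu hcu'
    continuousOn_const ht
  simp only [one_smul] at hincrement
  refine (hincrement.add_const (∫ x in a..b, u t x)).congr_of_mem (fun s hs => ?_) ht
  rw [intervalIntegral.integral_sub (hcu.uncurry_left s hs).intervalIntegrable
    (hcu.uncurry_left t ht).intervalIntegrable, sub_add_cancel]

end ParametricIntegral

section PeriodicBoundary

variable {a b : ℝ}

theorem integral_mul_deriv_eq_neg_of_periodic {f f' g g' : ℝ → ℝ}
    (hf : ∀ x ∈ uIcc a b, HasDerivWithinAt f (f' x) (uIcc a b) x)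
    (hg : ∀ x ∈ uIcc a b, HasDerivWithinAt g (g' x) (uIcc a b) x)
    (hf' : ContinuousOn f' (uIcc a b)) (hg' : ContinuousOn g' (uIcc a b))
    (hfab : f a = f b) (hgab : g a = g b) :
    ∫ x in a..b, f x * g' x = -∫ x in a..b, f' x * g x := by
  rw [intervalIntegral.integral_mul_deriv_eq_deriv_mul_of_hasDerivWithinAt hf hg
    hf'.intervalIntegrable hg'.intervalIntegrable, hfab, hgab, sub_self, zero_sub]

theorem integral_deriv_eq_zero_of_periodic {f f' : ℝ → ℝ}
    (hf : ∀ x ∈ uIcc a b, HasDerivWithinAt f (f' x) (uIcc a b) x)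
    (hf' : ContinuousOn f' (uIcc a b)) (hfab : f a = f b) :
    ∫ x in a..b, f' x = 0 := by
  simpa using integral_mul_deriv_eq_neg_of_periodic (f := fun _ => 1)
    (fun x _ => hasDerivWithinAt_const x _ _) hf continuousOn_const hf' rfl hfab

theorem integral_sq_mul_deriv_eq_zero_of_periodic {f f' : ℝ → ℝ}
    (hf : ∀ x ∈ uIcc a b, HasDerivWithinAt f (f' x) (uIcc a b) x)
    (hf' : ContinuousOn f' (uIcc a b)) (hfab : f a = f b) :
    ∫ x in a..b, f x ^ 2 * f' x = 0 := by
  have hcf : ContinuousOn f (uIcc a b) := fun x hx => (hf x hx).continuousWithinAt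
  have hcube := integral_deriv_eq_zero_of_periodic (f := fun x => f x ^ 3)
    (fun x hx => (hf x hx).pow 3) (by fun_prop) (by rw [hfab])
  simpa [mul_assoc, intervalIntegral.integral_const_mul] using hcube

theorem integral_deriv_sq_sub_integral_deriv_sq_of_periodic {f f₁ f₂ g g₁ g₂ : ℝ → ℝ}
    (hf : ∀ x ∈ uIcc a b, HasDerivWithinAt f (f₁ x) (uIcc a b) x)
    (hf₁ : ∀ x ∈ uIcc a b, HasDerivWithinAt f₁ (f₂ x) (uIcc a b) x)
    (hg : ∀ x ∈ uIcc a b, HasDerivWithinAt g (g₁ x) (uIcc a b) x)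
    (hg₁ : ∀ x ∈ uIcc a b, HasDerivWithinAt g₁ (g₂ x) (uIcc a b) x)
    (hf₂ : ContinuousOn f₂ (uIcc a b)) (hg₂ : ContinuousOn g₂ (uIcc a b))
    (hfab : f a = f b) (hf₁ab : f₁ a = f₁ b) (hgab : g a = g b) (hg₁ab : g₁ a = g₁ b) :
    (∫ x in a..b, f₁ x ^ 2) - ∫ x in a..b, g₁ x ^ 2 =
      -∫ x in a..b, (f₂ x + g₂ x) * (f x - g x) := by
  have hcf₁ : ContinuousOn f₁ (uIcc a b) := fun x hx => (hf₁ x hx).continuousWithinAt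
  have hcg₁ : ContinuousOn g₁ (uIcc a b) := fun x hx => (hg₁ x hx).continuousWithinAt
  rw [← integral_mul_deriv_eq_neg_of_periodic (f := fun x => f₁ x + g₁ x)
      (g := fun x => f x - g x) (g' := fun x => f₁ x - g₁ x)
      (fun x hx => (hf₁ x hx).add (hg₁ x hx)) (fun x hx => (hf x hx).sub (hg x hx))
      (by fun_prop) (by fun_prop) (by rw [hf₁ab, hg₁ab]) (by rw [hfab, hgab]),
    ← intervalIntegral.integral_sub (ContinuousOn.intervalIntegrable (by fun_prop))
      (ContinuousOn.intervalIntegrable (by fun_prop))]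
  simp only [sq_sub_sq]

/-- Integration by parts turns the increments of `∫ u₁²` into increments of `u` against `u₂`, so
that only `u` is differentiated in time. -/
theorem hasDerivWithinAt_integral_deriv_sq_of_periodic {S : Set ℝ} {t : ℝ}
    {u u' u₁ u₂ : ℝ → ℝ → ℝ} (hS : Convex ℝ S)
    (hu : ∀ s ∈ S, ∀ x ∈ uIcc a b, HasDerivWithinAt (fun r => u r x) (u' s x) S s)
    (hu₁ : ∀ s ∈ S, ∀ x ∈ uIcc a b, HasDerivWithinAt (u s) (u₁ s x) (uIcc a b) x)
    (hu₂ : ∀ s ∈ S, ∀ x ∈ uIcc a b, HasDerivWithinAt (u₁ s) (u₂ s x) (uIcc a b) x)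
    (hcu : ContinuousOn u.uncurry (S ×ˢ uIcc a b))
    (hcu' : ContinuousOn u'.uncurry (S ×ˢ uIcc a b))
    (hcu₂ : ContinuousOn u₂.uncurry (S ×ˢ uIcc a b))
    (hab : ∀ s ∈ S, u s a = u s b) (hab₁ : ∀ s ∈ S, u₁ s a = u₁ s b) (ht : t ∈ S) :
    HasDerivWithinAt (fun s => ∫ x in a..b, u₁ s x ^ 2) (-2 * ∫ x in a..b, u₂ t x * u' t x)
      S t := by
  have hcw : ContinuousOn (fun s x => u₂ s x + u₂ t x).uncurry (S ×ˢ uIcc a b) :=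
    hcu₂.add ((hcu₂.uncurry_left t ht).comp continuousOn_snd fun _ hp => hp.2)
  have hincrement := (hasDerivWithinAt_integral_smul_sub hS hu hcu hcu' hcw ht).neg
  simp only [smul_eq_mul, ← two_mul, mul_assoc, intervalIntegral.integral_const_mul,
    ← neg_mul] at hincrement
  refine (hincrement.add_const (∫ x in a..b, u₁ t x ^ 2)).congr_of_mem (fun s hs => ?_) ht
  rw [← sub_eq_iff_eq_add]
  exact integral_deriv_sq_sub_integral_deriv_sq_of_periodic (hu₁ s hs) (hu₂ s hs) (hu₁ t ht)
    (hu₂ t ht) (hcu₂.uncurry_left s hs) (hcu₂.uncurry_left t ht) (hab s hs) (hab₁ s hs)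
    (hab t ht) (hab₁ t ht)

theorem integral_deriv_mul_fourthOrder_eq_of_periodic {v v₁ v₂ v₃ : ℝ → ℝ} (α β γ : ℝ)
    (hv : ∀ x ∈ uIcc a b, HasDerivWithinAt v (v₁ x) (uIcc a b) x)
    (hv₁ : ∀ x ∈ uIcc a b, HasDerivWithinAt v₁ (v₂ x) (uIcc a b) x)
    (hv₂ : ∀ x ∈ uIcc a b, HasDerivWithinAt v₂ (v₃ x) (uIcc a b) x)
    (hv₃ : ContinuousOn v₃ (uIcc a b))
    (hvab : v a = v b) (hv₁ab : v₁ a = v₁ b) (hv₂ab : v₂ a = v₂ b) :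
    ∫ x in a..b, v₁ x * (-α * v₃ x - β * v₁ x - γ * v x ^ 2) =
      α * (∫ x in a..b, v₂ x * v₂ x) + β * ∫ x in a..b, v₂ x * v x := by
  have hcv : ContinuousOn v (uIcc a b) := fun x hx => (hv x hx).continuousWithinAt
  have hcv₁ : ContinuousOn v₁ (uIcc a b) := fun x hx => (hv₁ x hx).continuousWithinAt
  have hcv₂ : ContinuousOn v₂ (uIcc a b) := fun x hx => (hv₂ x hx).continuousWithinAt
  have hfourth : ∫ x in a..b, v₁ x * v₃ x = -∫ x in a..b, v₂ x * v₂ x :=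
    integral_mul_deriv_eq_neg_of_periodic hv₁ hv₂ hcv₂ hv₃ hv₁ab hv₂ab
  have hsecond : ∫ x in a..b, v₁ x * v₁ x = -∫ x in a..b, v₂ x * v x :=
    integral_mul_deriv_eq_neg_of_periodic hv₁ hv hcv₂ hcv₁ hv₁ab hvab
  have hcubic : ∫ x in a..b, v x ^ 2 * v₁ x = 0 :=
    integral_sq_mul_deriv_eq_zero_of_periodic hv hcv₁ hvab
  have hexpand : ∫ x in a..b, v₁ x * (-α * v₃ x - β * v₁ x - γ * v x ^ 2) =
      -α * (∫ x in a..b, v₁ x * v₃ x) - β * (∫ x in a..b, v₁ x * v₁ x) -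
        γ * ∫ x in a..b, v x ^ 2 * v₁ x := by
    simp only [← intervalIntegral.integral_const_mul]
    rw [← intervalIntegral.integral_sub, ← intervalIntegral.integral_sub]
    · exact intervalIntegral.integral_congr fun x _ => by ring
    all_goals exact ContinuousOn.intervalIntegrable (by fun_prop)
  rw [hexpand, hfourth, hsecond, hcubic]
  ring

theorem neg_two_mul_integral_deriv_mul_fourthOrder_le_of_periodic {v v₁ v₂ v₃ : ℝ → ℝ}
    {α : ℝ} (β γ : ℝ) (hα : 0 < α) (hab : a ≤ b)
    (hv : ∀ x ∈ uIcc a b, HasDerivWithinAt v (v₁ x) (uIcc a b) x)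
    (hv₁ : ∀ x ∈ uIcc a b, HasDerivWithinAt v₁ (v₂ x) (uIcc a b) x)
    (hv₂ : ∀ x ∈ uIcc a b, HasDerivWithinAt v₂ (v₃ x) (uIcc a b) x)
    (hv₃ : ContinuousOn v₃ (uIcc a b))
    (hvab : v a = v b) (hv₁ab : v₁ a = v₁ b) (hv₂ab : v₂ a = v₂ b) :
    -2 * ∫ x in a..b, v₁ x * (-α * v₃ x - β * v₁ x - γ * v x ^ 2) ≤
      β ^ 2 / (2 * α) * ∫ x in a..b, v x ^ 2 := by
  have hcv : ContinuousOn v (uIcc a b) := fun x hx => (hv x hx).continuousWithinAt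
  have hcv₂ : ContinuousOn v₂ (uIcc a b) := fun x hx => (hv₂ x hx).continuousWithinAt
  have hsquare : ∫ x in a..b, (β * v x + 2 * α * v₂ x) ^ 2 =
      β ^ 2 * (∫ x in a..b, v x ^ 2) + 4 * α * β * (∫ x in a..b, v₂ x * v x) +
        4 * α ^ 2 * ∫ x in a..b, v₂ x * v₂ x := by
    simp only [← intervalIntegral.integral_const_mul]
    rw [← intervalIntegral.integral_add, ← intervalIntegral.integral_add]
    · exact intervalIntegral.integral_congr fun x _ => by ring
    all_goals exact ContinuousOn.intervalIntegrable (by fun_prop)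
  have hsquare_nonneg : 0 ≤ ∫ x in a..b, (β * v x + 2 * α * v₂ x) ^ 2 :=
    intervalIntegral.integral_nonneg hab fun x _ => sq_nonneg _
  rw [integral_deriv_mul_fourthOrder_eq_of_periodic α β γ hv hv₁ hv₂ hv₃ hvab hv₁ab hv₂ab,
    div_mul_eq_mul_div, le_div_iff₀ (by positivity)]
  linarith

end PeriodicBoundary

theorem le_mul_exp_of_hasDerivWithinAt_le_mul {S : Set ℝ} {f f' : ℝ → ℝ} {k s t : ℝ}
    (hS : Convex ℝ S) (hf : ∀ r ∈ S, HasDerivWithinAt f (f' r) S r)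
    (hf' : ∀ r ∈ S, f' r ≤ k * f r) (hs : s ∈ S) (ht : t ∈ S) (hst : s ≤ t) :
    f t ≤ f s * Real.exp (k * (t - s)) := by
  have hderiv (r : ℝ) (hr : r ∈ S) : HasDerivWithinAt (fun r => f r * Real.exp (-k * r))
      (f' r * Real.exp (-k * r) + f r * (Real.exp (-k * r) * (-k * 1))) S r :=
    (hf r hr).mul ((hasDerivAt_id r).const_mul (-k)).exp.hasDerivWithinAt
  have hanti : AntitoneOn (fun r => f r * Real.exp (-k * r)) S := by
    refine antitoneOn_of_hasDerivWithinAt_nonpos hS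
      (fun r hr => (hderiv r hr).continuousWithinAt)
      (fun r hr => (hderiv r (interior_subset hr)).mono interior_subset) fun r hr => ?_
    have hrate := mul_le_mul_of_nonneg_right (hf' r (interior_subset hr))
      (Real.exp_pos (-k * r)).le
    linarith
  calc f t = f t * Real.exp (-k * t) * Real.exp (k * t) := by
        rw [mul_assoc, ← Real.exp_add, neg_mul, neg_add_cancel, Real.exp_zero, mul_one]
    _ ≤ f s * Real.exp (-k * s) * Real.exp (k * t) :=
        mul_le_mul_of_nonneg_right (hanti hs ht hst) (Real.exp_pos _).le
    _ = f s * Real.exp (k * (t - s)) := by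
        rw [mul_assoc, ← Real.exp_add]
        ring_nf

theorem abs_sub_le_sub_of_abs_hasDerivWithinAt_le {S : Set ℝ} {f f' B B' : ℝ → ℝ} {s t : ℝ}
    (hS : Convex ℝ S) (hf : ∀ r ∈ S, HasDerivWithinAt f (f' r) S r)
    (hB : ∀ r ∈ S, HasDerivWithinAt B (B' r) S r) (hf' : ∀ r ∈ S, |f' r| ≤ B' r)
    (hs : s ∈ S) (ht : t ∈ S) (hst : s ≤ t) : |f t - f s| ≤ B t - B s := by
  have hmono {g g' : ℝ → ℝ} (hg : ∀ r ∈ S, HasDerivWithinAt g (g' r) S r)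
      (hg' : ∀ r ∈ S, 0 ≤ g' r) : g s ≤ g t :=
    monotoneOn_of_hasDerivWithinAt_nonneg hS (fun r hr => (hg r hr).continuousWithinAt)
      (fun r hr => (hg r (interior_subset hr)).mono interior_subset)
      (fun r hr => hg' r (interior_subset hr)) hs ht hst
  have hsub : B s - f s ≤ B t - f t := hmono (fun r hr => (hB r hr).sub (hf r hr))
    fun r hr => sub_nonneg.2 (le_of_abs_le (hf' r hr))
  have hadd : B s + f s ≤ B t + f t := hmono (fun r hr => (hB r hr).add (hf r hr))
    fun r hr => by linarith [neg_le_of_abs_le (hf' r hr)]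
  exact abs_sub_le_iff.2 ⟨by linarith, by linarith⟩

theorem mul_exp_sub_one_le_exp_mul (n : ℕ) (x : ℝ) :
    n * (Real.exp x - 1) ≤ Real.exp (n * x) := by
  have hbernoulli := one_add_mul_sub_le_pow (by linarith [Real.exp_pos x] : -1 ≤ Real.exp x) n
  rw [Real.exp_nat_mul]
  linarith

theorem convex_ksDom (T : EReal) : Convex ℝ (ksDom T) :=
  OrdConnected.convex ⟨fun _ hs _ ht _ hr =>
    ⟨hs.1.trans hr.1, (EReal.coe_le_coe_iff.2 hr.2).trans_lt ht.2⟩⟩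

theorem zero_mem_ksDom {T : EReal} {τ : ℝ} (hτ : τ ∈ ksDom T) : 0 ∈ ksDom T :=
  ⟨le_rfl, (EReal.coe_le_coe_iff.2 hτ.1).trans_lt hτ.2⟩

theorem Iℓ_eq_uIcc {ℓ₀ : ℝ} (hℓ₀ : 0 ≤ ℓ₀) : Iℓ ℓ₀ = uIcc (-(ℓ₀ / 2)) (ℓ₀ / 2) :=
  (uIcc_of_le (by linarith)).symm

/-- The spatial average `Π(f)` of `f` over `[−ℓ₀/2, ℓ₀/2]`. -/
noncomputable def spatialAverage (ℓ₀ : ℝ) (f : ℝ → ℝ) : ℝ :=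
  1 / ℓ₀ * ∫ η in (-(ℓ₀ / 2))..(ℓ₀ / 2), f η

/-- The squared norm `‖f‖₂²` of `f` in `L²(−ℓ₀/2, ℓ₀/2)`. -/
noncomputable def l2NormSq (ℓ₀ : ℝ) (f : ℝ → ℝ) : ℝ :=
  ∫ η in (-(ℓ₀ / 2))..(ℓ₀ / 2), f η ^ 2

theorem l2NormSq_nonneg {ℓ₀ : ℝ} (hℓ₀ : 0 ≤ ℓ₀) (f : ℝ → ℝ) : 0 ≤ l2NormSq ℓ₀ f :=
  intervalIntegral.integral_nonneg (by linarith) fun _ _ => sq_nonneg _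

namespace IsKSSolutionOn

variable {ℓ₀ τ : ℝ} {T : EReal} {Φ Φτ : ℝ → ℝ → ℝ} {D : ℕ → ℝ → ℝ → ℝ}

theorem integral_time_deriv (hsol : IsKSSolutionOn ℓ₀ T Φ Φτ D) (hℓ₀ : 0 ≤ ℓ₀)
    (hτ : τ ∈ ksDom T) :
    ∫ η in (-(ℓ₀ / 2))..(ℓ₀ / 2), Φτ τ η = -(1 / 2) * l2NormSq ℓ₀ (D 1 τ) := by
  simp only [IsKSSolutionOn, Iℓ_eq_uIcc hℓ₀] at hsol
  obtain ⟨-, -, hD, -, hcD, heq, hper⟩ := hsol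
  have hcont (j : ℕ) (hj : j ≤ 4) : ContinuousOn (D j τ) (uIcc (-(ℓ₀ / 2)) (ℓ₀ / 2)) :=
    (hcD j hj).uncurry_left τ hτ
  have hc₁ := hcont 1 (by norm_num)
  have hc₂ := hcont 2 (by norm_num)
  have hc₄ := hcont 4 le_rfl
  have hflux : ∫ η in (-(ℓ₀ / 2))..(ℓ₀ / 2), (-3 * D 4 τ η - D 2 τ η) = 0 :=
    integral_deriv_eq_zero_of_periodic (f := fun η => -3 * D 3 τ η - D 1 τ η)
      (fun η hη => ((hD 3 (by norm_num) τ hτ η hη).const_mul (-3)).sub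
        (hD 1 (by norm_num) τ hτ η hη))
      (by fun_prop) (by rw [hper τ hτ 3 le_rfl, hper τ hτ 1 (by norm_num)])
  rw [intervalIntegral.integral_congr (heq τ hτ), intervalIntegral.integral_sub
    (ContinuousOn.intervalIntegrable (by fun_prop))
    (ContinuousOn.intervalIntegrable (by fun_prop)), hflux,
    intervalIntegral.integral_const_mul, zero_sub, ← neg_mul, l2NormSq]

theorem hasDerivWithinAt_spatialAverage (hsol : IsKSSolutionOn ℓ₀ T Φ Φτ D) (hℓ₀ : 0 < ℓ₀)
    (hτ : τ ∈ ksDom T) :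
    HasDerivWithinAt (fun t => spatialAverage ℓ₀ (Φ t))
      (-(1 / (2 * ℓ₀)) * l2NormSq ℓ₀ (D 1 τ)) (ksDom T) τ := by
  have hmean := hsol.integral_time_deriv hℓ₀.le hτ
  simp only [IsKSSolutionOn, Iℓ_eq_uIcc hℓ₀.le] at hsol
  obtain ⟨rfl, hΦτ, -, hcΦτ, hcD, -, -⟩ := hsol
  refine ((hasDerivWithinAt_integral_of_continuousOn (convex_ksDom T) hΦτ
    (hcD 0 (by norm_num)) hcΦτ hτ).const_mul (1 / ℓ₀)).congr_deriv ?_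
  rw [hmean]
  ring

theorem hasDerivWithinAt_l2NormSq (hsol : IsKSSolutionOn ℓ₀ T Φ Φτ D) (hℓ₀ : 0 ≤ ℓ₀)
    (hτ : τ ∈ ksDom T) :
    HasDerivWithinAt (fun t => l2NormSq ℓ₀ (D 1 t))
      (-2 * ∫ η in (-(ℓ₀ / 2))..(ℓ₀ / 2), D 2 τ η * Φτ τ η) (ksDom T) τ := by
  simp only [IsKSSolutionOn, Iℓ_eq_uIcc hℓ₀] at hsol
  obtain ⟨rfl, hΦτ, hD, hcΦτ, hcD, -, hper⟩ := hsol
  exact hasDerivWithinAt_integral_deriv_sq_of_periodic (convex_ksDom T) hΦτ (hD 0 (by norm_num))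
    (hD 1 (by norm_num)) (hcD 0 (by norm_num)) hcΦτ (hcD 2 (by norm_num))
    (fun t ht => hper t ht 0 (by norm_num)) (fun t ht => hper t ht 1 (by norm_num)) hτ

theorem neg_two_mul_integral_mul_time_deriv_le (hsol : IsKSSolutionOn ℓ₀ T Φ Φτ D)
    (hℓ₀ : 0 ≤ ℓ₀) (hτ : τ ∈ ksDom T) :
    -2 * ∫ η in (-(ℓ₀ / 2))..(ℓ₀ / 2), D 2 τ η * Φτ τ η ≤ 1 / 6 * l2NormSq ℓ₀ (D 1 τ) := by
  simp only [IsKSSolutionOn, Iℓ_eq_uIcc hℓ₀] at hsol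
  obtain ⟨-, -, hD, -, hcD, heq, hper⟩ := hsol
  calc -2 * ∫ η in (-(ℓ₀ / 2))..(ℓ₀ / 2), D 2 τ η * Φτ τ η
      = -2 * ∫ η in (-(ℓ₀ / 2))..(ℓ₀ / 2),
          D 2 τ η * (-3 * D 4 τ η - 1 * D 2 τ η - 1 / 2 * D 1 τ η ^ 2) := by
        rw [intervalIntegral.integral_congr fun η hη => ?_]
        rw [heq τ hτ η hη, one_mul]
    _ ≤ 1 ^ 2 / (2 * 3) * l2NormSq ℓ₀ (D 1 τ) :=
        neg_two_mul_integral_deriv_mul_fourthOrder_le_of_periodic 1 (1 / 2) (by norm_num)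
          (by linarith) (hD 1 (by norm_num) τ hτ) (hD 2 (by norm_num) τ hτ)
          (hD 3 (by norm_num) τ hτ) ((hcD 4 le_rfl).uncurry_left τ hτ)
          (hper τ hτ 1 (by norm_num)) (hper τ hτ 2 (by norm_num)) (hper τ hτ 3 le_rfl)
    _ = 1 / 6 * l2NormSq ℓ₀ (D 1 τ) := by norm_num

theorem l2NormSq_le_mul_exp (hsol : IsKSSolutionOn ℓ₀ T Φ Φτ D) (hℓ₀ : 0 ≤ ℓ₀)
    (hτ : τ ∈ ksDom T) :
    l2NormSq ℓ₀ (D 1 τ) ≤ l2NormSq ℓ₀ (D 1 0) * Real.exp (1 / 6 * τ) := by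
  simpa only [sub_zero] using le_mul_exp_of_hasDerivWithinAt_le_mul (convex_ksDom T)
    (fun t ht => hsol.hasDerivWithinAt_l2NormSq hℓ₀ ht)
    (fun t ht => hsol.neg_two_mul_integral_mul_time_deriv_le hℓ₀ ht) (zero_mem_ksDom hτ) hτ hτ.1

theorem abs_spatialAverage_sub_le (hsol : IsKSSolutionOn ℓ₀ T Φ Φτ D) (hℓ₀ : 0 < ℓ₀)
    (hτ : τ ∈ ksDom T) :
    |spatialAverage ℓ₀ (Φ τ) - spatialAverage ℓ₀ (Φ 0)| ≤
      3 / ℓ₀ * l2NormSq ℓ₀ (D 1 0) * (Real.exp (1 / 6 * τ) - 1) := by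
  have hbound (t : ℝ) : HasDerivAt
      (fun t => 3 / ℓ₀ * l2NormSq ℓ₀ (D 1 0) * Real.exp (1 / 6 * t))
      (3 / ℓ₀ * l2NormSq ℓ₀ (D 1 0) * (Real.exp (1 / 6 * t) * (1 / 6 * 1))) t :=
    ((hasDerivAt_id t).const_mul (1 / 6)).exp.const_mul _
  have hdiff := abs_sub_le_sub_of_abs_hasDerivWithinAt_le (convex_ksDom T)
    (fun t ht => hsol.hasDerivWithinAt_spatialAverage hℓ₀ ht)
    (fun t _ => (hbound t).hasDerivWithinAt) (fun t ht => ?_) (zero_mem_ksDom hτ) hτ hτ.1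
  · simpa [mul_sub] using hdiff
  rw [abs_mul, abs_neg, abs_of_nonneg (by positivity), abs_of_nonneg (l2NormSq_nonneg hℓ₀.le _)]
  calc 1 / (2 * ℓ₀) * l2NormSq ℓ₀ (D 1 t)
      ≤ 1 / (2 * ℓ₀) * (l2NormSq ℓ₀ (D 1 0) * Real.exp (1 / 6 * t)) := by
        gcongr
        exact hsol.l2NormSq_le_mul_exp hℓ₀.le ht
    _ = 3 / ℓ₀ * l2NormSq ℓ₀ (D 1 0) * (Real.exp (1 / 6 * t) * (1 / 6 * 1)) := by ring

end IsKSSolutionOn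

/-- estimate (Pi-sup): for any `C^{1,4}` solution of the
Kuramoto–Sivashinsky equation on `[0,T)`, the spatial average satisfies
`|Π(Φ(τ,·))| ≤ |Π(Φ₀)| + (3/(26ℓ₀))‖Φ₀'‖₂² e^{13τ/3}` (with `Φ₀ = Φ(0,·)`,
`Φ₀' = D 1 0`). -/
theorem KS_average_bound (ℓ₀ : ℝ) (T : EReal) (hℓ₀ : 0 < ℓ₀) (hT : 0 < T)
    (Φ Φτ : ℝ → ℝ → ℝ) (D : ℕ → ℝ → ℝ → ℝ)
    (hsol : IsKSSolutionOn ℓ₀ T Φ Φτ D) :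
    ∀ τ ∈ ksDom T,
      |1 / ℓ₀ * ∫ η in (-(ℓ₀ / 2))..(ℓ₀ / 2), Φ τ η| ≤
        |1 / ℓ₀ * ∫ η in (-(ℓ₀ / 2))..(ℓ₀ / 2), Φ 0 η| +
          3 / (26 * ℓ₀) * (∫ η in (-(ℓ₀ / 2))..(ℓ₀ / 2), (D 1 0 η) ^ 2) *
            Real.exp (13 * τ / 3) := by
  intro τ hτ
  have hnorm := l2NormSq_nonneg hℓ₀.le (D 1 0)
  have hexp : 26 * (Real.exp (1 / 6 * τ) - 1) ≤ Real.exp (13 * τ / 3) := by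
    rw [show 13 * τ / 3 = (26 : ℕ) * (1 / 6 * τ) by push_cast; ring]
    exact mod_cast mul_exp_sub_one_le_exp_mul 26 (1 / 6 * τ)
  change |spatialAverage ℓ₀ (Φ τ)| ≤ |spatialAverage ℓ₀ (Φ 0)| +
    3 / (26 * ℓ₀) * l2NormSq ℓ₀ (D 1 0) * Real.exp (13 * τ / 3)
  calc |spatialAverage ℓ₀ (Φ τ)|
      ≤ |spatialAverage ℓ₀ (Φ 0)| + |spatialAverage ℓ₀ (Φ τ) - spatialAverage ℓ₀ (Φ 0)| :=
        sub_le_iff_le_add'.1 (abs_sub_abs_le_abs_sub _ _)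
    _ ≤ |spatialAverage ℓ₀ (Φ 0)| +
          3 / ℓ₀ * l2NormSq ℓ₀ (D 1 0) * (Real.exp (1 / 6 * τ) - 1) := by
        gcongr
        exact hsol.abs_spatialAverage_sub_le hℓ₀ hτ
    _ = |spatialAverage ℓ₀ (Φ 0)| +
          3 / (26 * ℓ₀) * l2NormSq ℓ₀ (D 1 0) * (26 * (Real.exp (1 / 6 * τ) - 1)) := by
        field_simp
    _ ≤ _ := by gcongr
end

section
/- Fix ℓ₀ > 0, T > 0, and constants K, K₁ > 0. Let ρ : [0, T] × [−ℓ₀/2, ℓ₀/2] → ℝ be continuously differentiable in both variables with ρ(0, η) = 0 for all η, and suppose that ∫₀^T ∫_{−ℓ₀/2}^{ℓ₀/2} (ρ_τ(τ,η))² dη dτ ≤ K² and |ρ_η(τ,η)| ≤ K₁ for all (τ,η) ∈ [0,T] × [−ℓ₀/2, ℓ₀/2]. Then |ρ(τ,η)| ≤ √(T/ℓ₀)·K + ℓ₀·K₁ for all (τ,η) ∈ [0,T] × [−ℓ₀/2, ℓ₀/2]. -/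
open Set

/-!
Since `ρ` vanishes at time `0`, Cauchy–Schwarz in time gives
`|ρ(τ, y)|² ≤ T ∫₀ᵀ ρ_τ(σ, y)² dσ` for every `y`. By Fubini the right-hand side has average at
most `T K² / ℓ₀` over `y`, so some `y` satisfies `|ρ(τ, y)| ≤ √(T / ℓ₀) K`. The bound on `ρ_η`
then transports this estimate from `y` to every other point.
-/

open MeasureTheory Function

section Integral

variable {α β : Type*} [MeasurableSpace α] [MeasurableSpace β] {μ : Measure α} {ν : Measure β}

theorem sq_integral_le_measureReal_univ_mul_integral_sq [IsFiniteMeasure μ] {f : α → ℝ}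
    (hf : MemLp f 2 μ) : (∫ x, f x ∂μ) ^ 2 ≤ μ.real univ * ∫ x, f x ^ 2 ∂μ := by
  rcases eq_zero_or_neZero μ with rfl | _
  · simp
  have jensen : (⨍ x, f x ∂μ) ^ 2 ≤ ⨍ x, f x ^ 2 ∂μ :=
    even_two.convexOn_pow.map_average_le (by fun_prop) isClosed_univ (by simp)
      (hf.integrable one_le_two) hf.integrable_sq
  calc (∫ x, f x ∂μ) ^ 2
      = μ.real univ ^ 2 * (⨍ x, f x ∂μ) ^ 2 := by
        rw [← measure_smul_average μ f, smul_eq_mul, mul_pow]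
    _ ≤ μ.real univ ^ 2 * ⨍ x, f x ^ 2 ∂μ := by gcongr
    _ = μ.real univ * ∫ x, f x ^ 2 ∂μ := by
        rw [← measure_smul_average μ fun x => f x ^ 2, smul_eq_mul, sq, mul_assoc]

theorem memLp_two_norm_of_integrable_norm_sq {E : Type*} [NormedAddCommGroup E]
    {g : α → E} (hg : Integrable (fun x => ‖g x‖ ^ 2) μ) : MemLp (fun x => ‖g x‖) 2 μ := by
  have norm_measurable : AEStronglyMeasurable (fun x => ‖g x‖) μ := by
    simpa using hg.aestronglyMeasurable.aemeasurable.sqrt.aestronglyMeasurable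
  exact (memLp_two_iff_integrable_sq norm_measurable).mpr hg

theorem frequently_ae_measureReal_univ_mul_integral_le_integral_integral [SFinite μ]
    [IsFiniteMeasure ν] [NeZero ν] {F : α → β → ℝ} (hF : Integrable (uncurry F) (μ.prod ν)) :
    ∃ᶠ y in ae ν, ν.real univ * ∫ x, F x y ∂μ ≤ ∫ x, ∫ y, F x y ∂ν ∂μ := by
  have le_average : ∃ᶠ y in ae ν, ∫ x, F x y ∂μ ≤ ⨍ y, ∫ x, F x y ∂μ ∂ν :=
    frequently_ae_iff.mpr
      (measure_le_average_pos (NeZero.ne ν) hF.integral_prod_right).ne'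
  refine le_average.mono fun y hy => ?_
  calc ν.real univ * ∫ x, F x y ∂μ
      ≤ ν.real univ * ⨍ y, ∫ x, F x y ∂μ ∂ν := by gcongr
    _ = ∫ y, ∫ x, F x y ∂μ ∂ν := measure_smul_average ν _
    _ = ∫ x, ∫ y, F x y ∂ν ∂μ := (integral_integral_swap hF).symm

end Integral

section Derivative

variable {E : Type*} [NormedAddCommGroup E] [NormedSpace ℝ E] {a b C : ℝ} {f f' : ℝ → E}

theorem norm_sub_le_integral_norm_of_hasDerivAt (hab : a ≤ b) (hf : ContinuousOn f (Icc a b))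
    (hderiv : ∀ x ∈ Ioo a b, HasDerivAt f (f' x) x)
    (hint : IntervalIntegrable (fun x => ‖f' x‖) volume a b) :
    ‖f b - f a‖ ≤ ∫ x in a..b, ‖f' x‖ :=
  norm_sub_le_integral_of_norm_deriv_le_of_le hab hf
    (fun x hx => (hderiv x hx).differentiableAt.differentiableWithinAt)
    (.of_forall fun x hx => (hderiv x hx).deriv ▸ le_rfl) hint

theorem norm_sub_sq_le_mul_integral_norm_sq_of_hasDerivAt (hab : a ≤ b)
    (hf : ContinuousOn f (Icc a b)) (hderiv : ∀ x ∈ Ioo a b, HasDerivAt f (f' x) x)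
    (hint : IntervalIntegrable (fun x => ‖f' x‖ ^ 2) volume a b) :
    ‖f b - f a‖ ^ 2 ≤ (b - a) * ∫ x in a..b, ‖f' x‖ ^ 2 := by
  have memLp : MemLp (fun x => ‖f' x‖) 2 (volume.restrict (Ioc a b)) :=
    memLp_two_norm_of_integrable_norm_sq hint.1
  have integrable : IntervalIntegrable (fun x => ‖f' x‖) volume a b :=
    (intervalIntegrable_iff_integrableOn_Ioc_of_le hab).mpr (memLp.integrable one_le_two)
  calc ‖f b - f a‖ ^ 2
      ≤ (∫ x in a..b, ‖f' x‖) ^ 2 := by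
        gcongr
        exact norm_sub_le_integral_norm_of_hasDerivAt hab hf hderiv integrable
    _ ≤ (b - a) * ∫ x in a..b, ‖f' x‖ ^ 2 := by
        simpa [intervalIntegral.integral_of_le hab, hab] using
          sq_integral_le_measureReal_univ_mul_integral_sq memLp

theorem norm_sub_left_sq_le_mul_integral_norm_sq_of_hasDerivWithinAt
    (hderiv : ∀ x ∈ Icc a b, HasDerivWithinAt f (f' x) (Icc a b) x)
    (hint : IntervalIntegrable (fun x => ‖f' x‖ ^ 2) volume a b) {c : ℝ} (hc : c ∈ Icc a b) :
    ‖f c - f a‖ ^ 2 ≤ (b - a) * ∫ x in a..b, ‖f' x‖ ^ 2 := by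
  have continuousOn : ContinuousOn f (Icc a c) := fun x hx =>
    (hderiv x ⟨hx.1, hx.2.trans hc.2⟩).continuousWithinAt.mono (Icc_subset_Icc_right hc.2)
  have hasDerivAt : ∀ x ∈ Ioo a c, HasDerivAt f (f' x) x := fun x hx =>
    have x_lt_b : x < b := hx.2.trans_le hc.2
    (hderiv x ⟨hx.1.le, x_lt_b.le⟩).hasDerivAt (Icc_mem_nhds hx.1 x_lt_b)
  have integrable : IntervalIntegrable (fun x => ‖f' x‖ ^ 2) volume a c :=
    hint.mono_set (uIcc_subset_uIcc_left (Icc_subset_uIcc hc))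
  calc ‖f c - f a‖ ^ 2
      ≤ (c - a) * ∫ x in a..c, ‖f' x‖ ^ 2 :=
        norm_sub_sq_le_mul_integral_norm_sq_of_hasDerivAt hc.1 continuousOn hasDerivAt integrable
    _ ≤ (b - a) * ∫ x in a..b, ‖f' x‖ ^ 2 := by
        gcongr
        · exact intervalIntegral.integral_nonneg hc.1 fun x _ => by positivity
        · linarith [hc.1, hc.2]
        · exact hc.2
        · exact intervalIntegral.integral_mono_interval le_rfl hc.1 hc.2
            (.of_forall fun x => by positivity) hint

theorem norm_le_norm_add_mul_of_norm_hasDerivWithinAt_le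
    (hderiv : ∀ x ∈ Icc a b, HasDerivWithinAt f (f' x) (Icc a b) x)
    (hbound : ∀ x ∈ Icc a b, ‖f' x‖ ≤ C) {x y : ℝ} (hx : x ∈ Icc a b) (hy : y ∈ Icc a b) :
    ‖f x‖ ≤ ‖f y‖ + (b - a) * C := by
  have C_nonneg : 0 ≤ C := (norm_nonneg _).trans (hbound x hx)
  calc ‖f x‖
      ≤ ‖f y‖ + ‖f x - f y‖ := norm_le_norm_add_norm_sub' _ _
    _ ≤ ‖f y‖ + C * ‖x - y‖ := by
        gcongr
        exact (convex_Icc a b).norm_image_sub_le_of_norm_hasDerivWithin_le hderiv hbound hy hx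
    _ ≤ ‖f y‖ + (b - a) * C := by
        rw [mul_comm (b - a)]
        gcongr
        exact Real.dist_le_of_mem_Icc hx hy

end Derivative

section Rectangle

variable {E : Type*} [NormedAddCommGroup E] [NormedSpace ℝ E] {ρ ρτ ρη : ℝ → ℝ → E}

theorem exists_forall_mul_norm_sub_left_sq_le_mul_integral_integral {s t a b : ℝ} (hst : s ≤ t)
    (hab : a < b)
    (hderτ : ∀ τ ∈ Icc s t, ∀ η ∈ Icc a b,
      HasDerivWithinAt (fun σ => ρ σ η) (ρτ τ η) (Icc s t) τ)
    (hint : IntegrableOn (fun p : ℝ × ℝ => ‖ρτ p.1 p.2‖ ^ 2) (Icc s t ×ˢ Icc a b)) :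
    ∃ y ∈ Icc a b, ∀ τ ∈ Icc s t,
      (b - a) * ‖ρ τ y - ρ s y‖ ^ 2 ≤
        (t - s) * ∫ σ in s..t, ∫ η in a..b, ‖ρτ σ η‖ ^ 2 := by
  let μ := volume.restrict (Ioc s t)
  let ν := volume.restrict (Ioc a b)
  have integrable : Integrable (uncurry fun σ η => ‖ρτ σ η‖ ^ 2) (μ.prod ν) := by
    rw [Measure.prod_restrict]
    exact hint.mono_set (prod_mono Ioc_subset_Icc_self Ioc_subset_Icc_self)
  have : NeZero ν := ⟨by simpa [ν] using hab⟩
  obtain ⟨y, y_le_average, slice_integrable, y_mem⟩ :=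
    ((frequently_ae_measureReal_univ_mul_integral_le_integral_integral integrable).and_eventually
      (integrable.prod_left_ae.and (ae_restrict_mem measurableSet_Ioc))).exists
  have y_mem_Icc : y ∈ Icc a b := Ioc_subset_Icc_self y_mem
  have slice_le : (b - a) * ∫ σ in s..t, ‖ρτ σ y‖ ^ 2 ≤
      ∫ σ in s..t, ∫ η in a..b, ‖ρτ σ η‖ ^ 2 := by
    simpa [μ, ν, intervalIntegral.integral_of_le, hst, hab.le] using y_le_average
  refine ⟨y, y_mem_Icc, fun τ hτ => ?_⟩
  calc (b - a) * ‖ρ τ y - ρ s y‖ ^ 2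
      ≤ (b - a) * ((t - s) * ∫ σ in s..t, ‖ρτ σ y‖ ^ 2) := by
        gcongr
        exact norm_sub_left_sq_le_mul_integral_norm_sq_of_hasDerivWithinAt
          (fun σ hσ => hderτ σ hσ y y_mem_Icc)
          ((intervalIntegrable_iff_integrableOn_Ioc_of_le hst).mpr slice_integrable) hτ
    _ = (t - s) * ((b - a) * ∫ σ in s..t, ‖ρτ σ y‖ ^ 2) := mul_left_comm _ _ _
    _ ≤ (t - s) * ∫ σ in s..t, ∫ η in a..b, ‖ρτ σ η‖ ^ 2 := by gcongr

theorem sup_norm_bound_general {a b T K K₁ : ℝ} (hab : a < b) (hK : 0 ≤ K)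
    (hderτ : ∀ τ ∈ Icc 0 T, ∀ η ∈ Icc a b,
      HasDerivWithinAt (fun t => ρ t η) (ρτ τ η) (Icc 0 T) τ)
    (hderη : ∀ τ ∈ Icc 0 T, ∀ η ∈ Icc a b,
      HasDerivWithinAt (fun y => ρ τ y) (ρη τ η) (Icc a b) η)
    (hint : IntegrableOn (fun p : ℝ × ℝ => ‖ρτ p.1 p.2‖ ^ 2) (Icc 0 T ×ˢ Icc a b))
    (hzero : ∀ η ∈ Icc a b, ρ 0 η = 0)
    (hL2 : ∫ τ in 0..T, ∫ η in a..b, ‖ρτ τ η‖ ^ 2 ≤ K ^ 2)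
    (hgrad : ∀ τ ∈ Icc 0 T, ∀ η ∈ Icc a b, ‖ρη τ η‖ ≤ K₁) :
    ∀ τ ∈ Icc 0 T, ∀ η ∈ Icc a b,
      ‖ρ τ η‖ ≤ √(T / (b - a)) * K + (b - a) * K₁ := by
  intro τ hτ η hη
  have T_nonneg : 0 ≤ T := hτ.1.trans hτ.2
  have length_pos : 0 < b - a := sub_pos.mpr hab
  obtain ⟨y, hy, slice_bound⟩ :=
    exists_forall_mul_norm_sub_left_sq_le_mul_integral_integral T_nonneg hab hderτ hint
  have norm_sq_le : (b - a) * ‖ρ τ y‖ ^ 2 ≤ T * K ^ 2 := by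
    have := slice_bound τ hτ
    rw [hzero y hy, sub_zero, sub_zero] at this
    exact this.trans (by gcongr)
  have norm_le : ‖ρ τ y‖ ≤ √(T / (b - a)) * K := by
    refine le_of_sq_le_sq ?_ (by positivity)
    rw [mul_pow, Real.sq_sqrt (by positivity), div_mul_eq_mul_div, le_div_iff₀' length_pos]
    exact norm_sq_le
  calc ‖ρ τ η‖
      ≤ ‖ρ τ y‖ + (b - a) * K₁ :=
        norm_le_norm_add_mul_of_norm_hasDerivWithinAt_le (hderη τ hτ) (hgrad τ hτ) hη hy
    _ ≤ √(T / (b - a)) * K + (b - a) * K₁ := by gcongr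

end Rectangle

/-- Corollary 6.7: a uniform sup-norm bound on `ρ` deduced from an
`L²`-in-time bound on `ρ_τ` and a uniform bound on `ρ_η`, for a `C¹` function `ρ` on
`[0,T] × [−ℓ₀/2, ℓ₀/2]` vanishing at `τ = 0`.  Here `ρτ` and `ρη` are the partial
derivatives of `ρ` with respect to the first and second variable, respectively. -/
theorem sup_norm_bound (ℓ₀ T K K₁ : ℝ) (hℓ₀ : 0 < ℓ₀) (hT : 0 < T)
    (hK : 0 < K) (hK₁ : 0 < K₁)
    (ρ ρτ ρη : ℝ → ℝ → ℝ)
    (hderτ : ∀ τ ∈ Icc (0 : ℝ) T, ∀ η ∈ Iℓ ℓ₀,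
      HasDerivWithinAt (fun t => ρ t η) (ρτ τ η) (Icc (0 : ℝ) T) τ)
    (hderη : ∀ τ ∈ Icc (0 : ℝ) T, ∀ η ∈ Iℓ ℓ₀,
      HasDerivWithinAt (fun y => ρ τ y) (ρη τ η) (Iℓ ℓ₀) η)
    (hcontτ : ContinuousOn (fun p : ℝ × ℝ => ρτ p.1 p.2) (Icc (0 : ℝ) T ×ˢ Iℓ ℓ₀))
    (hcontη : ContinuousOn (fun p : ℝ × ℝ => ρη p.1 p.2) (Icc (0 : ℝ) T ×ˢ Iℓ ℓ₀))
    (hzero : ∀ η ∈ Iℓ ℓ₀, ρ 0 η = 0)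
    (hL2 : (∫ τ in (0 : ℝ)..T, ∫ η in (-(ℓ₀ / 2))..(ℓ₀ / 2), (ρτ τ η) ^ 2) ≤ K ^ 2)
    (hgrad : ∀ τ ∈ Icc (0 : ℝ) T, ∀ η ∈ Iℓ ℓ₀, |ρη τ η| ≤ K₁) :
    ∀ τ ∈ Icc (0 : ℝ) T, ∀ η ∈ Iℓ ℓ₀,
      |ρ τ η| ≤ Real.sqrt (T / ℓ₀) * K + ℓ₀ * K₁ := by
  simpa [Iℓ] using sup_norm_bound_general (neg_lt_self (half_pos hℓ₀)) hK.le hderτ hderη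
    ((hcontτ.norm.pow 2).integrableOn_compact (isCompact_Icc.prod isCompact_Icc)) hzero
    (by simpa using hL2) hgrad
end
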